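/- Fix disjoint sets Y (agent atoms) and X (environment atoms). For all LTLf formulas φ_org and φ_new over atoms Y ∪ X, every history h, and every agent strategy σ: σ solves incremental synthesis for (φ_org, h, φ_new) if and only if σ is winning for the LTLf formula prog(φ_org, h) ∧ φ_new. -/

import Mathlib

inductive LTLf (P : Type) : Type where
  | tt : LTLf P
  | ff : LTLf P
  | atom : P → LTLf P
  | natom : P → LTLf P
  | conj : LTLf P → LTLf P → LTLf P
  | disj : LTLf P → LTLf P → LTLf P
  | next : LTLf P → LTLf P
  | wnext : LTLf P → LTLf P
  | untl : LTLf P → LTLf P → LTLf P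
  | release : LTLf P → LTLf P → LTLf P
  deriving DecidableEq

def LTLf.Sat {P : Type} : List (Set P) → LTLf P → Prop
  | _, .tt => True
  | _, .ff => False
  | [], .atom _ => False
  | w :: _, .atom p => p ∈ w
  | [], .natom _ => False
  | w :: _, .natom p => p ∉ w
  | τ, .conj φ₁ φ₂ => LTLf.Sat τ φ₁ ∧ LTLf.Sat τ φ₂
  | τ, .disj φ₁ φ₂ => LTLf.Sat τ φ₁ ∨ LTLf.Sat τ φ₂
  | [], .next _ => False
  | _ :: τ, .next φ => τ ≠ [] ∧ LTLf.Sat τ φ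
  | [], .wnext _ => True
  | _ :: τ, .wnext φ => τ = [] ∨ LTLf.Sat τ φ
  | [], .untl _ _ => False
  | w :: τ, .untl φ₁ φ₂ =>
      LTLf.Sat (w :: τ) φ₂ ∨ (LTLf.Sat (w :: τ) φ₁ ∧ LTLf.Sat τ (.untl φ₁ φ₂))
  | [], .release _ _ => True
  | w :: τ, .release φ₁ φ₂ =>
      LTLf.Sat (w :: τ) φ₂ ∧ (LTLf.Sat (w :: τ) φ₁ ∨ LTLf.Sat τ (.release φ₁ φ₂))
termination_by τ φ => (τ.length, sizeOf φ)

open Classical in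
noncomputable def LTLf.prog {P : Type} : LTLf P → Set P → LTLf P
  | .tt, _ => .tt
  | .ff, _ => .ff
  | .atom p, w => if p ∈ w then .tt else .ff
  | .natom p, w => if p ∈ w then .ff else .tt
  | .conj φ₁ φ₂, w => .conj (φ₁.prog w) (φ₂.prog w)
  | .disj φ₁ φ₂, w => .disj (φ₁.prog w) (φ₂.prog w)
  | .next φ, _ => .conj φ (.untl .tt .tt)
  | .wnext φ, _ => .disj φ (.release .ff .ff)
  | .untl φ₁ φ₂, w =>
      .disj (φ₂.prog w) (.conj (φ₁.prog w) (.conj (.untl φ₁ φ₂) (.untl .tt .tt)))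
  | .release φ₁ φ₂, w =>
      .conj (φ₂.prog w) (.disj (φ₁.prog w) (.disj (.release φ₁ φ₂) (.release .ff .ff)))

noncomputable def LTLf.progTrace {P : Type} (φ : LTLf P) (h : List (Set P)) : LTLf P :=
  h.foldl LTLf.prog φ

/-- The joint interpretation over atoms `Y ⊕ X` determined by an agent move `m.1 ⊆ Y`
and an environment move `m.2 ⊆ X`. -/
def joint {Y X : Type} (m : Set Y × Set X) : Set (Y ⊕ X) :=
  {a | Sum.elim (· ∈ m.1) (· ∈ m.2) a}

/-- The finite trace (over `2^(Y∪X)`) formed by the first `k` joint moves of a play. -/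
def jointTrace {Y X : Type} (π : ℕ → Set Y × Set X) (k : ℕ) : List (Set (Y ⊕ X)) :=
  (List.range k).map fun i => joint (π i)

/-- The finite trace corresponding to a history (finite sequence of joint moves). -/
def histTrace {Y X : Type} (h : List (Set Y × Set X)) : List (Set (Y ⊕ X)) :=
  h.map joint

/-- A play is σ-consistent if at every instant the agent move is the one prescribed by
the strategy σ on the preceding environment moves (in particular `Y_0 = σ(ε)`). -/
def PlayConsistent {Y X : Type} (σ : List (Set X) → Set Y) (π : ℕ → Set Y × Set X) : Prop :=
  ∀ i : ℕ, (π i).1 = σ ((List.range i).map fun j => (π j).2)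

/-- A history is σ-consistent if every agent move in it is prescribed by σ on the
preceding environment moves. -/
def HistConsistent {Y X : Type} (σ : List (Set X) → Set Y) (h : List (Set Y × Set X)) : Prop :=
  ∀ (i : ℕ) (hi : i < h.length), (h.get ⟨i, hi⟩).1 = σ ((h.take i).map Prod.snd)
/-- A strategy σ is winning for the LTLf formula φ over atoms Y ∪ X if every
σ-consistent play has a finite, possibly empty, prefix satisfying φ. -/
def WinningFor {Y X : Type} (σ : List (Set X) → Set Y) (φ : LTLf (Y ⊕ X)) : Prop :=
  ∀ π : ℕ → Set Y × Set X, PlayConsistent σ π → ∃ k : ℕ, LTLf.Sat (jointTrace π k) φ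

/-- A strategy σ is winning for φ assuming the history h if for every σ-consistent play τ
the concatenation h·τ has a finite, possibly empty, prefix (extending h) satisfying φ. -/
def WinningAssuming {Y X : Type} (σ : List (Set X) → Set Y) (φ : LTLf (Y ⊕ X))
    (h : List (Set Y × Set X)) : Prop :=
  ∀ π : ℕ → Set Y × Set X, PlayConsistent σ π →
    ∃ k : ℕ, LTLf.Sat (histTrace h ++ jointTrace π k) φ

/-- A strategy σ solves incremental synthesis for (φ_org, h, φ_new) if every σ-consistent
play has a finite, possibly empty, prefix ρ such that h·ρ satisfies φ_org and ρ
satisfies φ_new. -/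
def SolvesIncremental {Y X : Type} (σ : List (Set X) → Set Y) (φorg : LTLf (Y ⊕ X))
    (h : List (Set Y × Set X)) (φnew : LTLf (Y ⊕ X)) : Prop :=
  ∀ π : ℕ → Set Y × Set X, PlayConsistent σ π →
    ∃ k : ℕ, LTLf.Sat (histTrace h ++ jointTrace π k) φorg ∧ LTLf.Sat (jointTrace π k) φnew

/-!
Progression transfers satisfaction: `τ ⊨ prog(φ, w)` iff `w·τ ⊨ φ`. Only the temporal operators
need an argument. The rules for `X` and `W` guard the remaining obligation with `tt U tt` and
`ff R ff`, which test whether the rest of the trace is nonempty or empty. On the unfoldings of `U`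
and `R` these guards change nothing, because the empty trace falsifies every until and satisfies
every release. Iterating along the history `h`, a prefix `ρ` of a play satisfies `prog(φ_org, h)`
iff `h·ρ` satisfies `φ_org`, so the two synthesis conditions agree on every prefix of every play.
-/

namespace LTLf

variable {P : Type} {φ ψ : LTLf P} {τ : List (Set P)}

theorem Sat.ne_nil_of_untl (hsat : Sat τ (.untl φ ψ)) : τ ≠ [] := by
  rintro rfl
  simp only [Sat] at hsat

theorem sat_release_nil : Sat [] (.release φ ψ) := by
  simp only [Sat]

theorem sat_untl_tt_tt : Sat τ (.untl .tt .tt) ↔ τ ≠ [] := by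
  cases τ <;> simp [Sat]

theorem sat_release_ff_ff : Sat τ (.release .ff .ff) ↔ τ = [] := by
  cases τ <;> simp [Sat]

theorem sat_untl_conj_untl_tt_tt :
    Sat τ (.conj (.untl φ ψ) (.untl .tt .tt)) ↔ Sat τ (.untl φ ψ) := by
  rw [Sat, sat_untl_tt_tt]
  exact and_iff_left_of_imp Sat.ne_nil_of_untl

theorem sat_release_disj_release_ff_ff :
    Sat τ (.disj (.release φ ψ) (.release .ff .ff)) ↔ Sat τ (.release φ ψ) := by
  rw [Sat, sat_release_ff_ff]
  exact or_iff_left_of_imp fun hτ => hτ ▸ sat_release_nil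

theorem sat_prog (φ : LTLf P) (w : Set P) (τ : List (Set P)) :
    Sat τ (φ.prog w) ↔ Sat (w :: τ) φ := by
  induction φ with
  | tt | ff => simp only [prog, Sat]
  | atom p | natom p => by_cases hp : p ∈ w <;> simp [prog, Sat, hp]
  | conj φ ψ ihφ ihψ | disj φ ψ ihφ ihψ => simp only [prog, Sat, ihφ, ihψ]
  | next φ => rw [prog, Sat, Sat, sat_untl_tt_tt, and_comm]
  | wnext φ => rw [prog, Sat, Sat, sat_release_ff_ff, or_comm]
  | untl φ ψ ihφ ihψ => rw [prog, Sat, Sat, sat_untl_conj_untl_tt_tt, ihφ, ihψ, ← Sat]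
  | release φ ψ ihφ ihψ =>
    rw [prog, Sat, Sat, sat_release_disj_release_ff_ff, ihφ, ihψ, ← Sat]

theorem progTrace_nil (φ : LTLf P) : φ.progTrace [] = φ :=
  rfl

theorem progTrace_cons (φ : LTLf P) (w : Set P) (h : List (Set P)) :
    φ.progTrace (w :: h) = (φ.prog w).progTrace h :=
  rfl

theorem sat_progTrace (φ : LTLf P) (h τ : List (Set P)) :
    Sat τ (φ.progTrace h) ↔ Sat (h ++ τ) φ := by
  induction h generalizing φ with
  | nil => rw [progTrace_nil, List.nil_append]
  | cons w h ih => rw [progTrace_cons, ih, sat_prog, List.cons_append]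

end LTLf

/-- A strategy σ solves incremental synthesis for (φ_org, h, φ_new) iff
σ is winning for the LTLf formula prog(φ_org, h) ∧ φ_new. -/
theorem incremental_iff_winning_prog_conj {Y X : Type}
    (φorg φnew : LTLf (Y ⊕ X)) (h : List (Set Y × Set X)) (σ : List (Set X) → Set Y) :
    SolvesIncremental σ φorg h φnew ↔
      WinningFor σ (LTLf.conj (φorg.progTrace (histTrace h)) φnew) := by
  refine forall₂_congr fun π _ => exists_congr fun k => ?_
  rw [LTLf.Sat, LTLf.sat_progTrace]
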